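/- Let 0<β<1. For h>0 and s>0 define F_h(s) = (sin(π(1−β))/π) ∫₀^s h^{1−β} (y+h)^{−1} y^{β−1} dy. Then for all 0<b<c and all r>0, ∫₀^b βx^{β−1} F_{b−x}(c−b) dx + (c^β − b^β) = ∫₀^{b+r} βx^{β−1} F_{b+r−x}(c−b) dx + ((c+r)^β − (b+r)^β). -/

import Mathlib

open MeasureTheory Real

/-- The distribution function of the overshoot of level `h` by a standard
`(1−β)`-stable subordinator:
`F_h(s) = (sin(π(1−β))/π) ∫₀^s h^{1−β} (y+h)^{−1} y^{β−1} dy`. -/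
noncomputable def overshootCDF (β h s : ℝ) : ℝ :=
  (Real.sin (Real.pi * (1 - β)) / Real.pi) *
    ∫ y in Set.Ioo (0 : ℝ) s, h ^ (1 - β) * (y + h)⁻¹ * y ^ (β - 1)

/-!
Write `s = c - b`. Both sides equal `s ^ β`, because the identity already holds for densities: if
`f_h` denotes the density of the overshoot of level `h`, then
`∫₀^b x^{β-1} f_{b-x}(y) dx + (y + b)^{β-1} = y^{β-1}`, and integrating over `y ∈ (0, s)` gives
the claim by Fubini. For the density identity, substitute `x = b / (1 + u)` and split into partial
fractions: what remains are two integrals `∫₀^∞ u^{-β} (u + t)⁻¹ du`, which are Beta integrals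
evaluated by Euler's reflection formula.
-/

theorem intervalIntegrable_add_rpow {a : ℝ} (ha : -1 < a) (t p q : ℝ) :
    IntervalIntegrable (fun y => (y + t) ^ a) volume p q := by
  simpa using (intervalIntegral.intervalIntegrable_rpow' ha).comp_add_right
    (a := p + t) (b := q + t) t

theorem integral_add_rpow {a : ℝ} (ha : -1 < a) (t p q : ℝ) :
    ∫ y in p..q, (y + t) ^ a = ((q + t) ^ (a + 1) - (p + t) ^ (a + 1)) / (a + 1) := by
  rw [intervalIntegral.integral_comp_add_right (· ^ a) t, integral_rpow (Or.inl ha)]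

section BetaIntegrals

open ProbabilityTheory Set

theorem beta_comm (a b : ℝ) : beta a b = beta b a := by
  rw [beta, beta, mul_comm, add_comm]

theorem beta_self_one_sub (a : ℝ) : beta a (1 - a) = π / sin (π * a) := by
  rw [beta, Gamma_mul_Gamma_one_sub, add_sub_cancel, Gamma_one, div_one]

theorem image_div_one_add_Ioi {b : ℝ} (hb : 0 < b) :
    (fun u : ℝ => b / (1 + u)) '' Ioi 0 = Ioo 0 b := by
  ext x
  constructor
  · rintro ⟨u, hu : 0 < u, rfl⟩
    exact ⟨by positivity, div_lt_self hb (by linarith)⟩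
  · rintro ⟨hx, hxb⟩
    exact ⟨b / x - 1, sub_pos.2 ((one_lt_div hx).2 hxb), by field_simp; ring⟩

theorem integral_Ioo_eq_integral_Ioi_div_one_add {E : Type*} [NormedAddCommGroup E]
    [NormedSpace ℝ E] {b : ℝ} (hb : 0 < b) (g : ℝ → E) :
    ∫ x in Ioo 0 b, g x = ∫ u in Ioi (0 : ℝ), (b / (1 + u) ^ 2) • g (b / (1 + u)) := by
  have hasDeriv : ∀ u ∈ Ioi (0 : ℝ),
      HasDerivWithinAt (fun u => b / (1 + u)) (-(b / (1 + u) ^ 2)) (Ioi 0) u := by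
    intro u (hu : 0 < u)
    have := (hasDerivAt_const u b).fun_div ((hasDerivAt_id u).const_add 1) (by positivity)
    exact (this.congr_deriv (by simp [neg_div])).hasDerivWithinAt
  have antitone : AntitoneOn (fun u => b / (1 + u)) (Ioi 0) := by
    intro u (hu : 0 < u) v _ huv
    dsimp only
    gcongr
  rw [← image_div_one_add_Ioi hb,
    integral_image_eq_integral_deriv_smul_of_antitoneOn measurableSet_Ioi hasDeriv antitone]
  simp only [neg_neg]

theorem integral_Ioo_rpow_mul_one_sub_rpow {a b : ℝ} (ha : 0 < a) (hb : 0 < b) :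
    ∫ x in Ioo (0 : ℝ) 1, x ^ (a - 1) * (1 - x) ^ (b - 1) = beta a b := by
  rw [beta_eq_betaIntegralReal a b ha hb, Complex.betaIntegral,
    intervalIntegral.integral_of_le zero_le_one, integral_Ioc_eq_integral_Ioo,
    ← Complex.ofReal_re (∫ x in Ioo (0 : ℝ) 1, _), ← integral_complex_ofReal]
  congr 1
  refine setIntegral_congr_fun measurableSet_Ioo fun x ⟨hx0, hx1⟩ => ?_
  simp [Complex.ofReal_cpow hx0.le, Complex.ofReal_cpow (sub_nonneg.2 hx1.le)]

theorem integral_Ioi_rpow_mul_one_add_rpow {a b : ℝ} (ha : 0 < a) (hb : 0 < b) :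
    ∫ u in Ioi (0 : ℝ), u ^ (a - 1) * (1 + u) ^ (-(a + b)) = beta a b := by
  rw [beta_comm, ← integral_Ioo_rpow_mul_one_sub_rpow hb ha,
    integral_Ioo_eq_integral_Ioi_div_one_add one_pos]
  refine setIntegral_congr_fun measurableSet_Ioi fun u (hu : 0 < u) => ?_
  have hu1 : 0 < 1 + u := by positivity
  have one_sub : 1 - 1 / (1 + u) = u / (1 + u) := by field_simp; ring
  have exponents : (1 + u) ^ (-(a + b))
      = ((1 + u) ^ 2 * (1 + u) ^ (b - 1) * (1 + u) ^ (a - 1))⁻¹ := by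
    rw [rpow_neg hu1.le, ← rpow_natCast, ← rpow_add hu1, ← rpow_add hu1]
    congr 2
    push_cast
    ring
  rw [one_sub, div_rpow zero_le_one hu1.le, div_rpow hu.le hu1.le, one_rpow, exponents, smul_eq_mul]
  field_simp

theorem integral_Ioi_rpow_mul_add_rpow {a b t : ℝ} (ha : 0 < a) (hb : 0 < b) (ht : 0 < t) :
    ∫ u in Ioi (0 : ℝ), u ^ (a - 1) * (u + t) ^ (-(a + b)) = t ^ (-b) * beta a b := by
  have rescale := integral_comp_mul_left_Ioi' (fun u => u ^ (a - 1) * (u + t) ^ (-(a + b))) 0 ht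
  rw [mul_zero] at rescale
  rw [← rescale, ← integral_Ioi_rpow_mul_one_add_rpow ha hb, ← integral_smul,
    ← integral_const_mul]
  refine setIntegral_congr_fun measurableSet_Ioi fun u (hu : 0 < u) => ?_
  have exponents : t ^ (-b) = t * t ^ (a - 1) * t ^ (-(a + b)) := by
    rw [← rpow_one_add' ht.le (by linarith), ← rpow_add ht]
    ring_nf
  have factor : t * u + t = t * (1 + u) := by ring
  rw [factor, mul_rpow ht.le hu.le, mul_rpow ht.le (by positivity), exponents, smul_eq_mul]
  ring

theorem integral_Ioi_rpow_mul_add_inv {a t : ℝ} (ha0 : 0 < a) (ha1 : a < 1) (ht : 0 < t) :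
    ∫ u in Ioi (0 : ℝ), u ^ (a - 1) * (u + t)⁻¹ = t ^ (a - 1) * (π / sin (π * a)) := by
  have h := integral_Ioi_rpow_mul_add_rpow ha0 (sub_pos.2 ha1) ht
  simpa only [add_sub_cancel, rpow_neg_one, neg_sub, beta_self_one_sub] using h

theorem integrableOn_Ioi_rpow_mul_add_inv {a t : ℝ} (ha0 : 0 < a) (ha1 : a < 1) (ht : 0 < t) :
    IntegrableOn (fun u : ℝ => u ^ (a - 1) * (u + t)⁻¹) (Ioi 0) := by
  refine not_imp_comm.1 integral_undef ?_
  rw [integral_Ioi_rpow_mul_add_inv ha0 ha1 ht, ← beta_self_one_sub]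
  exact (mul_pos (rpow_pos_of_pos ht _) (beta_pos ha0 (sub_pos.2 ha1))).ne'

theorem integral_Ioi_rpow_mul_sub_mul_add_inv {a s t : ℝ} (ha0 : 0 < a) (ha1 : a < 1)
    (hs : 0 < s) (ht : 0 < t) :
    ∫ u in Ioi (0 : ℝ), u ^ (a - 1) * (s * (u + s)⁻¹ - t * (u + t)⁻¹)
      = (s ^ a - t ^ a) * (π / sin (π * a)) := by
  have integrable {r : ℝ} (hr : 0 < r) :=
    (integrableOn_Ioi_rpow_mul_add_inv ha0 ha1 hr).const_mul r
  have rpow_eq {r : ℝ} (hr : 0 < r) : r ^ a = r * r ^ (a - 1) := by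
    rw [rpow_sub_one hr.ne', mul_div_cancel₀ _ hr.ne']
  simp_rw [mul_sub, mul_left_comm _ s, mul_left_comm _ t]
  rw [integral_sub (integrable hs) (integrable ht), integral_const_mul, integral_const_mul,
    integral_Ioi_rpow_mul_add_inv ha0 ha1 hs, integral_Ioi_rpow_mul_add_inv ha0 ha1 ht,
    rpow_eq hs, rpow_eq ht]
  ring

end BetaIntegrals

section Overshoot

open Set

/-- The density at `y` of the overshoot of level `h` by a standard `(1 - β)`-stable subordinator,
that is, the integrand of `overshootCDF` with the normalizing constant included. -/
noncomputable def overshootPDF (β h y : ℝ) : ℝ :=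
  sin (π * (1 - β)) / π * (h ^ (1 - β) * (y + h)⁻¹ * y ^ (β - 1))

theorem overshootCDF_eq_integral_overshootPDF (β h s : ℝ) :
    overshootCDF β h s = ∫ y in Ioo 0 s, overshootPDF β h y :=
  (integral_const_mul _ _).symm

variable {β b : ℝ}

theorem sin_pi_mul_one_sub_pos (hβ0 : 0 < β) (hβ1 : β < 1) : 0 < sin (π * (1 - β)) :=
  sin_pos_of_pos_of_lt_pi (mul_pos pi_pos (sub_pos.2 hβ1))
    (mul_lt_of_lt_one_right pi_pos (sub_lt_self 1 hβ0))

theorem overshootPDF_nonneg (hβ0 : 0 < β) (hβ1 : β < 1) {h y : ℝ} (hh : 0 ≤ h) (hy : 0 ≤ y) :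
    0 ≤ overshootPDF β h y := by
  have := sin_pi_mul_one_sub_pos hβ0 hβ1
  unfold overshootPDF
  positivity

theorem integral_Ioo_rpow_mul_sub_rpow_mul_inv (hβ0 : 0 < β) (hβ1 : β < 1) (hb : 0 < b)
    {y : ℝ} (hy : 0 < y) :
    ∫ x in Ioo 0 b, x ^ (β - 1) * ((b - x) ^ (1 - β) * (y + (b - x))⁻¹)
      = (1 - (y / (y + b)) ^ (1 - β)) * (π / sin (π * (1 - β))) := by
  have ht : 0 < y / (y + b) := by positivity
  have half_line :=
    integral_Ioi_rpow_mul_sub_mul_add_inv (sub_pos.2 hβ1) (sub_lt_self 1 hβ0) one_pos ht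
  rw [one_rpow] at half_line
  rw [integral_Ioo_eq_integral_Ioi_div_one_add hb, ← half_line]
  refine setIntegral_congr_fun measurableSet_Ioi fun u (hu : 0 < u) => ?_
  have hx : 0 < b / (1 + u) := by positivity
  have sub_eq : b - b / (1 + u) = u * (b / (1 + u)) := by field_simp; ring
  have rpow_x : (b / (1 + u)) ^ (β - 1) * (b / (1 + u)) ^ (1 - β) = 1 := by
    rw [← rpow_add hx, sub_add_sub_cancel, sub_self, rpow_zero]
  have rpow_u : u ^ (1 - β) = u * u ^ (1 - β - 1) := by
    rw [rpow_sub_one hu.ne', mul_div_cancel₀ _ hu.ne']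
  have partial_fractions : b / (1 + u) ^ 2 * (u * (y + u * (b / (1 + u)))⁻¹)
      = 1 * (u + 1)⁻¹ - y / (y + b) * (u + y / (y + b))⁻¹ := by
    have : y * (1 + u) + u * b ≠ 0 := by positivity
    have : u * (y + b) + y ≠ 0 := by positivity
    field_simp
    ring
  rw [smul_eq_mul, sub_eq, mul_rpow hu.le hx.le, rpow_u, ← partial_fractions]
  linear_combination
    b / (1 + u) ^ 2 * (u * (y + u * (b / (1 + u)))⁻¹) * u ^ (1 - β - 1) * rpow_x

theorem integral_rpow_mul_overshootPDF (hβ0 : 0 < β) (hβ1 : β < 1) (hb : 0 < b)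
    {y : ℝ} (hy : 0 < y) :
    ∫ x in Ioo 0 b, x ^ (β - 1) * overshootPDF β (b - x) y
      = y ^ (β - 1) - (y + b) ^ (β - 1) := by
  have hsin := sin_pi_mul_one_sub_pos hβ0 hβ1
  have hyb : 0 < y + b := by positivity
  calc ∫ x in Ioo 0 b, x ^ (β - 1) * overshootPDF β (b - x) y
    _ = sin (π * (1 - β)) / π * y ^ (β - 1)
          * ∫ x in Ioo 0 b, x ^ (β - 1) * ((b - x) ^ (1 - β) * (y + (b - x))⁻¹) := by
        rw [← integral_const_mul]
        congr 1 with x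
        rw [overshootPDF]
        ring
    _ = y ^ (β - 1) * (1 - (y / (y + b)) ^ (1 - β)) := by
        rw [integral_Ioo_rpow_mul_sub_rpow_mul_inv hβ0 hβ1 hb hy]
        field_simp
    _ = y ^ (β - 1) - (y + b) ^ (β - 1) := by
        rw [← neg_sub β 1, rpow_neg (by positivity), div_rpow hy.le hyb.le]
        field_simp

theorem integrableOn_rpow_mul_overshootPDF (hβ0 : 0 < β) (hβ1 : β < 1) (hb : 0 < b)
    {y : ℝ} (hy : 0 < y) :
    IntegrableOn (fun x => x ^ (β - 1) * overshootPDF β (b - x) y) (Ioo 0 b) := by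
  refine not_imp_comm.1 integral_undef ?_
  rw [integral_rpow_mul_overshootPDF hβ0 hβ1 hb hy]
  exact (sub_pos.2 (rpow_lt_rpow_of_neg hy (lt_add_of_pos_right y hb) (by linarith))).ne'


theorem integrable_prod_rpow_mul_overshootPDF (hβ0 : 0 < β) (hβ1 : β < 1) (hb : 0 < b) {s : ℝ}
    (hs : 0 ≤ s) :
    Integrable (fun p : ℝ × ℝ => p.1 ^ (β - 1) * overshootPDF β (b - p.1) p.2)
      ((volume.restrict (Ioo 0 b)).prod (volume.restrict (Ioo 0 s))) := by
  have measurable : Measurable fun p : ℝ × ℝ => p.1 ^ (β - 1) * overshootPDF β (b - p.1) p.2 := by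
    unfold overshootPDF
    fun_prop
  rw [integrable_prod_iff' measurable.aestronglyMeasurable]
  constructor
  · filter_upwards [ae_restrict_mem measurableSet_Ioo] with y hy
    exact integrableOn_rpow_mul_overshootPDF hβ0 hβ1 hb hy.1
  · have hβ : -1 < β - 1 := by linarith
    have integral_norm : ∀ y ∈ Ioo 0 s, y ^ (β - 1) - (y + b) ^ (β - 1)
        = ∫ x in Ioo 0 b, ‖x ^ (β - 1) * overshootPDF β (b - x) y‖ := by
      intro y hy
      rw [← integral_rpow_mul_overshootPDF hβ0 hβ1 hb hy.1]
      refine setIntegral_congr_fun measurableSet_Ioo fun x hx => (norm_of_nonneg ?_).symm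
      exact mul_nonneg (rpow_nonneg hx.1.le _)
        (overshootPDF_nonneg hβ0 hβ1 (sub_nonneg.2 hx.2.le) hy.1.le)
    have integrable := (intervalIntegral.intervalIntegrable_rpow' hβ).sub
      (intervalIntegrable_add_rpow hβ b 0 s)
    exact ((intervalIntegrable_iff_integrableOn_Ioo_of_le hs).1 integrable).congr_fun
      integral_norm measurableSet_Ioo

theorem integral_rpow_mul_overshootCDF_add (hβ0 : 0 < β) (hβ1 : β < 1) (hb : 0 < b) {s : ℝ}
    (hs : 0 ≤ s) :
    (∫ x in Ioo 0 b, β * x ^ (β - 1) * overshootCDF β (b - x) s) + ((b + s) ^ β - b ^ β)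
      = s ^ β := by
  have hβ : -1 < β - 1 := by linarith
  have fubini : ∫ x in Ioo 0 b, x ^ (β - 1) * overshootCDF β (b - x) s
      = ∫ y in 0..s, (y ^ (β - 1) - (y + b) ^ (β - 1)) := by
    simp_rw [overshootCDF_eq_integral_overshootPDF, ← integral_const_mul]
    rw [integral_integral_swap (integrable_prod_rpow_mul_overshootPDF hβ0 hβ1 hb hs),
      intervalIntegral.integral_of_le hs, integral_Ioc_eq_integral_Ioo]
    exact setIntegral_congr_fun measurableSet_Ioo fun y hy =>
      integral_rpow_mul_overshootPDF hβ0 hβ1 hb hy.1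
  simp_rw [mul_assoc]
  rw [integral_const_mul, fubini, intervalIntegral.integral_sub
      (intervalIntegral.intervalIntegrable_rpow' hβ) (intervalIntegrable_add_rpow hβ b 0 s),
    integral_rpow (Or.inl hβ), integral_add_rpow hβ, sub_add_cancel, zero_rpow hβ0.ne',
    zero_add, add_comm s b]
  field_simp
  ring

end Overshoot

/-- The shift-invariance identity (single-interval case of Proposition 3.1(c)):
for `0<β<1`, `0<b<c` and `r>0`,
`∫₀^b βx^{β−1} F_{b−x}(c−b) dx + (c^β − b^β)
  = ∫₀^{b+r} βx^{β−1} F_{b+r−x}(c−b) dx + ((c+r)^β − (b+r)^β)`. -/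
theorem overshoot_shift_invariance (β : ℝ) (hβ0 : 0 < β) (hβ1 : β < 1)
    (b c r : ℝ) (hb : 0 < b) (hbc : b < c) (hr : 0 < r) :
    (∫ x in Set.Ioo (0 : ℝ) b, β * x ^ (β - 1) * overshootCDF β (b - x) (c - b))
        + (c ^ β - b ^ β)
      = (∫ x in Set.Ioo (0 : ℝ) (b + r), β * x ^ (β - 1) * overshootCDF β (b + r - x) (c - b))
        + ((c + r) ^ β - (b + r) ^ β) := by
  have hs : 0 ≤ c - b := sub_nonneg.2 hbc.le
  have initial := integral_rpow_mul_overshootCDF_add hβ0 hβ1 hb hs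
  have shifted := integral_rpow_mul_overshootCDF_add hβ0 hβ1 (add_pos hb hr) hs
  rw [add_sub_cancel] at initial
  rw [add_right_comm, add_sub_cancel] at shifted
  exact initial.trans shifted.symm
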